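/- Let E be a real normed vector space, U ⊆ E an open set, and f : E → ℝ a function that is continuously differentiable (C¹) on U. Assume that for every x ∈ U, either f(x) = 0 or the Fréchet derivative of f at x is the zero functional. Then the derivative of f vanishes at every point of U; in particular, if U is moreover preconnected, then f is constant on U. -/

import Mathlib

/-- Let `E` be a real normed space, `U ⊆ E` open, and `f : E → ℝ` be `C¹` on `U`.
If at every point of `U` either `f` vanishes or its Fréchet derivative vanishes, then
the derivative of `f` vanishes at every point of `U`; in particular, if `U` is moreover
preconnected, then `f` is constant on `U`. -/
theorem fderiv_eq_zero_of_sq_mul_fderiv_eq_zero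
    {E : Type*} [NormedAddCommGroup E] [NormedSpace ℝ E]
    (U : Set E) (hU : IsOpen U) (f : E → ℝ)
    (hf : ContDiffOn ℝ 1 f U)
    (h : ∀ x ∈ U, f x = 0 ∨ fderiv ℝ f x = 0) :
    (∀ x ∈ U, fderiv ℝ f x = 0) ∧
      (IsPreconnected U → ∀ x ∈ U, ∀ y ∈ U, f x = f y) := by
  have key : ∀ x ∈ U, fderiv ℝ f x = 0 := by
    intro x hx
    by_contra hne
    have hc : ContinuousAt (fderiv ℝ f) x :=
      (hf.continuousOn_fderiv_of_isOpen hU le_rfl).continuousAt (hU.mem_nhds hx)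
    have hz : f =ᶠ[nhds x] fun _ => (0 : ℝ) := by
      filter_upwards [hc.eventually_ne hne, hU.mem_nhds hx] with y hy hyU
      exact (h y hyU).resolve_right hy
    apply hne
    rw [hz.fderiv_eq]
    simp
  exact ⟨key, fun hp x hx y hy =>
    hU.is_const_of_fderiv_eq_zero hp (hf.differentiableOn one_ne_zero) key hx hy⟩
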